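/- Let τ ∈ Z[λ] be a nonzero nonunit such that 16 divides τ. Then G_0(τ) is a normal subgroup of G_0(τ/4) and the quotient group G_0(τ/4)/G_0(τ) is isomorphic to ℤ/4ℤ × ℤ/4ℤ. -/

import Mathlib

/-!
Put `t = τ/4`, so that `4 ∣ t`. For `A = [[a, b], [c, d]]` representing an element of `G₀(t)`, the
class of `(c/t)·a` in `ℤ[λ]/4 ≅ (ℤ/4)²` depends only on the image of `A` in `PSL(2,ℝ)`. It is
multiplicative in `A` because `4 ∣ t` makes `ad ≡ 1 (mod 4)`, and because `a² ≡ 1 (mod 4)`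
(`sq_of_mem_G5`). Since `a` is then a unit modulo `4`, the kernel is exactly `G₀(τ)`.

The congruence `a² ≡ 1 (mod 4)` follows from `a ≡ 1 (mod 2)`, and the latter from the fact that
the orbit of `(1, 0)` under `G₅` acting on `(ℤ[λ]/2)²` has only the five elements
`(1,0), (λ,1), (λ,λ), (1,λ), (0,1)` (`colSet`, `column_of_mem_G5`).

For surjectivity write `t = 4·g·u` with `g` a rational integer and `u = p + qλ` primitive. As `2` is
inert, the norm `N = u·w` (`w` the conjugate of `u`) is odd. For `m = 4gN` one has `m/t = w`, and
the parabolic elements with lower left entries `-miλ` and `-mjλ³` belong to `G₀(t)` and have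
images `-iλw` and `-jλ³w`. Since `λ` and `λ³ = 1 + 2λ` form a `ℤ`-basis of `ℤ[λ]` and `w` is a unit
modulo `4`, these images generate `ℤ[λ]/4`.
-/

open Matrix

noncomputable section

/-- `λ = 2 cos(π/5) = (1+√5)/2`. -/
def lam : ℝ := 2 * Real.cos (Real.pi / 5)

/-- The ring `ℤ[λ]`, as a subring of `ℝ`. -/
def Zlam : Subring ℝ := Subring.closure {lam}

/-- `λ` as an element of `ℤ[λ]`. -/
def lamZ : Zlam := ⟨lam, Subring.subset_closure rfl⟩

/-- `SL(2,ℝ)`. -/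
abbrev SL2R := Matrix.SpecialLinearGroup (Fin 2) ℝ

/-- `PSL(2,ℝ)`, realized as `SL(2,ℝ)` modulo its center `{±1}`. -/
abbrev PSL2R := SL2R ⧸ Subgroup.center SL2R

/-- The canonical projection `SL(2,ℝ) → PSL(2,ℝ)`. -/
def toPSL : SL2R →* PSL2R := QuotientGroup.mk' (Subgroup.center SL2R)

/-- The generator `[[1, λ], [0, 1]]` of the Hecke group `G₅`. -/
def Tgen : SL2R := ⟨!![1, lam; 0, 1], by simp [Matrix.det_fin_two_of]⟩

/-- The generator `[[0, -1], [1, 0]]` of the Hecke group `G₅`. -/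
def Sgen : SL2R := ⟨!![0, -1; 1, 0], by simp [Matrix.det_fin_two_of]⟩

/-- The Hecke group `G₅ ≤ PSL(2,ℝ)`, generated by the images of
`[[1, λ], [0, 1]]` and `[[0, -1], [1, 0]]`. -/
def G5 : Subgroup PSL2R := Subgroup.closure {toPSL Tgen, toPSL Sgen}

/-- The subgroup of `SL(2,ℝ)` of matrices with entries in `ℤ[λ]` whose `(2,1)` entry is
divisible by `τ`. -/
def SL0 (τ : ℝ) : Subgroup SL2R where
  carrier := { A | (∀ i j, A.1 i j ∈ Zlam) ∧ ∃ k ∈ Zlam, A.1 1 0 = τ * k }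
  one_mem' := by
    refine ⟨fun i j => ?_, 0, Zlam.zero_mem, by simp⟩
    rcases Decidable.eq_or_ne i j with h | h <;>
      simp [Matrix.one_apply, h, Zlam.one_mem, Zlam.zero_mem]
  mul_mem' := by
    rintro A B ⟨hA, kA, hkA, hA10⟩ ⟨hB, kB, hkB, hB10⟩
    constructor
    · intro i j
      have : (A * B).1 i j = A.1 i 0 * B.1 0 j + A.1 i 1 * B.1 1 j := by
        simp [Matrix.mul_apply, Fin.sum_univ_two]
      rw [this]
      exact Zlam.add_mem (Zlam.mul_mem (hA i 0) (hB 0 j)) (Zlam.mul_mem (hA i 1) (hB 1 j))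
    · refine ⟨kA * B.1 0 0 + A.1 1 1 * kB,
        Zlam.add_mem (Zlam.mul_mem hkA (hB 0 0)) (Zlam.mul_mem (hA 1 1) hkB), ?_⟩
      have : (A * B).1 1 0 = A.1 1 0 * B.1 0 0 + A.1 1 1 * B.1 1 0 := by
        simp [Matrix.mul_apply, Fin.sum_univ_two]
      rw [this, hA10, hB10]; ring
  inv_mem' := by
    rintro A ⟨hA, kA, hkA, hA10⟩
    rw [Matrix.SpecialLinearGroup.SL2_inv_expl A]
    constructor
    · intro i j
      fin_cases i <;> fin_cases j <;>
        simp [Zlam.neg_mem, hA 0 0, hA 0 1, hA 1 0, hA 1 1]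
    · exact ⟨-kA, Zlam.neg_mem hkA, by simp [hA10]⟩

/-- The congruence subgroup `G₀(τ) ≤ G₅`: elements of `G₅` represented by a matrix with
entries in `ℤ[λ]` whose `(2,1)` entry is divisible by `τ`. -/
def G0 (τ : ℝ) : Subgroup PSL2R := G5 ⊓ (SL0 τ).map toPSL

/-- The principal congruence subgroup `G(ν)` of `G₅` (as a set): elements of `G₅`
represented by a matrix with entries in `ℤ[λ]` that is congruent to `±I` modulo `ν`. -/
def Gp (ν : ℝ) : Set PSL2R :=
  { g | g ∈ G5 ∧ ∃ A : SL2R, toPSL A = g ∧ (∀ i j, A.1 i j ∈ Zlam) ∧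
      ((∀ i j, ∃ k ∈ Zlam, A.1 i j - (1 : Matrix (Fin 2) (Fin 2) ℝ) i j = ν * k) ∨
       (∀ i j, ∃ k ∈ Zlam, A.1 i j + (1 : Matrix (Fin 2) (Fin 2) ℝ) i j = ν * k)) }

/-- `x/y` is in reduced form: `(x, y)ᵗ` is a column of a matrix representing an element
of `G₅`. -/
def IsReducedForm (x y : ℝ) : Prop :=
  ∃ A : SL2R, toPSL A ∈ G5 ∧
    ((A.1 0 0 = x ∧ A.1 1 0 = y) ∨ (A.1 0 1 = x ∧ A.1 1 1 = y))

/-- `g` is a gcd of `a` and `b` in `ℤ[λ]` (well defined up to units). -/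
def IsGCDOf (g a b : Zlam) : Prop := g ∣ a ∧ g ∣ b ∧ ∀ d : Zlam, d ∣ a → d ∣ b → d ∣ g

/-- `gcd(a, b)` is a unit in `ℤ[λ]`. -/
def CoprimeZ (a b : Zlam) : Prop := ∀ d : Zlam, d ∣ a → d ∣ b → IsUnit d

/-- `b = [τ]`: `(b)` is the largest ideal of `ℤ[λ]` with `(b²) ⊆ (τ)`. -/
def IsRadOf (τ b : Zlam) : Prop := τ ∣ b ^ 2 ∧ ∀ s : Zlam, τ ∣ s ^ 2 → b ∣ s

/-- `r ∈ ℤ[λ]` is `G₅`-elementary: whenever `x/(r·y)` is in reduced form,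
`x² ≡ 1 (mod r)`. -/
def G5Elementary (r : Zlam) : Prop :=
  ∀ x y : Zlam, IsReducedForm (x : ℝ) ((r : ℝ) * (y : ℝ)) → r ∣ (x ^ 2 - 1)

end

/-! ### The ring `ℤ[λ]` -/

theorem lam_eq_goldenRatio : lam = Real.goldenRatio := by
  rw [lam, Real.cos_pi_div_five, Real.goldenRatio]; ring

theorem lam_sq : lam ^ 2 = lam + 1 := by
  rw [lam_eq_goldenRatio]; exact Real.goldenRatio_sq

theorem lam_mem : lam ∈ Zlam := Subring.subset_closure rfl

theorem mem_Zlam_iff (x : ℝ) : x ∈ Zlam ↔ ∃ p q : ℤ, x = p + q * lam := by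
  constructor
  · intro h
    induction h using Subring.closure_induction with
    | mem x hx => exact ⟨0, 1, by simpa using hx⟩
    | zero => exact ⟨0, 0, by simp⟩
    | one => exact ⟨1, 0, by simp⟩
    | add x y _ _ hx hy =>
      obtain ⟨p, q, rfl⟩ := hx
      obtain ⟨r, s, rfl⟩ := hy
      exact ⟨p + r, q + s, by push_cast; ring⟩
    | neg x _ hx =>
      obtain ⟨p, q, rfl⟩ := hx
      exact ⟨-p, -q, by push_cast; ring⟩
    | mul x y _ _ hx hy =>
      obtain ⟨p, q, rfl⟩ := hx
      obtain ⟨r, s, rfl⟩ := hy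
      exact ⟨p * r + q * s, p * s + q * r + q * s, by
        push_cast; linear_combination (q * s : ℝ) * lam_sq⟩
  · rintro ⟨p, q, rfl⟩
    exact Zlam.add_mem (intCast_mem Zlam p) (Zlam.mul_mem (intCast_mem Zlam q) lam_mem)

theorem coords_unique {p q r s : ℤ} (h : (p : ℝ) + q * lam = r + s * lam) : p = r ∧ q = s := by
  have hirr : Irrational lam := by
    rw [lam_eq_goldenRatio]; exact Real.goldenRatio_irrational
  have hqs : q = s := by
    by_contra hne
    have hne' : ((q - s : ℤ) : ℝ) ≠ 0 := by exact_mod_cast sub_ne_zero.mpr hne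
    refine hirr ⟨((r - p : ℤ) : ℚ) / ((q - s : ℤ) : ℚ), ?_⟩
    push_cast at hne' ⊢
    rw [div_eq_iff hne']
    linear_combination -h
  subst hqs
  refine ⟨?_, rfl⟩
  have : (p : ℝ) = r := by linarith
  exact_mod_cast this

open Classical in
/-- Reduction modulo `4`: sends `p + qλ ∈ ℤ[λ]` to `(p mod 4, q mod 4)`. Reals outside `ℤ[λ]` are
sent to `0`. -/
noncomputable def red (x : ℝ) : ZMod 4 × ZMod 4 :=
  if h : ∃ p q : ℤ, x = p + q * lam then ((h.choose : ℤ), (h.choose_spec.choose : ℤ)) else 0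

theorem red_mk (p q : ℤ) : red (p + q * lam) = ((p : ZMod 4), (q : ZMod 4)) := by
  have h : ∃ p' q' : ℤ, (p + q * lam : ℝ) = p' + q' * lam := ⟨p, q, rfl⟩
  obtain ⟨h1, h2⟩ := coords_unique h.choose_spec.choose_spec
  rw [red, dif_pos h]
  exact Prod.ext (congrArg (Int.cast : ℤ → ZMod 4) h1.symm)
    (congrArg (Int.cast : ℤ → ZMod 4) h2.symm)

theorem red_add {x y : ℝ} (hx : x ∈ Zlam) (hy : y ∈ Zlam) : red (x + y) = red x + red y := by
  obtain ⟨p, q, rfl⟩ := (mem_Zlam_iff x).1 hx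
  obtain ⟨r, s, rfl⟩ := (mem_Zlam_iff y).1 hy
  have : (p + q * lam + (r + s * lam) : ℝ) = ((p + r : ℤ) : ℝ) + ((q + s : ℤ) : ℝ) * lam := by
    push_cast; ring
  rw [this, red_mk, red_mk, red_mk]
  simp

theorem red_eq_zero_iff {x : ℝ} (hx : x ∈ Zlam) : red x = 0 ↔ ∃ k ∈ Zlam, x = 4 * k := by
  constructor
  · obtain ⟨p, q, rfl⟩ := (mem_Zlam_iff x).1 hx
    rw [red_mk, Prod.mk_eq_zero, ZMod.intCast_zmod_eq_zero_iff_dvd,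
      ZMod.intCast_zmod_eq_zero_iff_dvd]
    rintro ⟨⟨r, rfl⟩, ⟨s, rfl⟩⟩
    exact ⟨r + s * lam, (mem_Zlam_iff _).2 ⟨r, s, rfl⟩, by push_cast; ring⟩
  · rintro ⟨k, hk, rfl⟩
    obtain ⟨r, s, rfl⟩ := (mem_Zlam_iff k).1 hk
    have : (4 * (r + s * lam) : ℝ) = ((4 * r : ℤ) : ℝ) + ((4 * s : ℤ) : ℝ) * lam := by
      push_cast; ring
    rw [this, red_mk, Prod.mk_eq_zero, ZMod.intCast_zmod_eq_zero_iff_dvd,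
      ZMod.intCast_zmod_eq_zero_iff_dvd]
    exact ⟨⟨r, rfl⟩, ⟨s, rfl⟩⟩

theorem four_mul_mem {x : ℝ} (hx : x ∈ Zlam) : 4 * x ∈ Zlam :=
  Zlam.mul_mem (by exact_mod_cast intCast_mem Zlam 4) hx

theorem red_congr {x y z : ℝ} (hy : y ∈ Zlam) (hz : z ∈ Zlam) (h : x = y + 4 * z) :
    red x = red y := by
  rw [h, red_add hy (four_mul_mem hz), (red_eq_zero_iff (four_mul_mem hz)).2 ⟨z, hz, rfl⟩, add_zero]

/-! ### First columns of elements of `G₅` modulo `2` -/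

theorem mul_entry (A B : SL2R) (i j : Fin 2) :
    (A * B).1 i j = A.1 i 0 * B.1 0 j + A.1 i 1 * B.1 1 j := by
  simp [Matrix.mul_apply, Fin.sum_univ_two]

theorem Tgen_inv : (Tgen⁻¹).1 = !![1, -lam; 0, 1] := by
  rw [Matrix.SpecialLinearGroup.SL2_inv_expl]; simp [Tgen]; rfl

theorem Sgen_inv : (Sgen⁻¹).1 = !![0, 1; -1, 0] := by
  rw [Matrix.SpecialLinearGroup.SL2_inv_expl]; simp [Sgen]; rfl

theorem entries_of_toPSL_eq {A B : SL2R} (h : toPSL A = toPSL B) :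
    ∃ r : ℝ, (r = 1 ∨ r = -1) ∧ ∀ i j, B.1 i j = r * A.1 i j := by
  have h' : A⁻¹ * B ∈ Subgroup.center SL2R := QuotientGroup.eq.1 h
  obtain ⟨r, hr, hrs⟩ := Matrix.SpecialLinearGroup.mem_center_iff.1 h'
  refine ⟨r, mul_self_eq_one_iff.1 (by simpa [sq] using hr), fun i j => ?_⟩
  have hB : B = A * (A⁻¹ * B) := by group
  rw [hB, Matrix.SpecialLinearGroup.coe_mul, ← hrs]
  simp [mul_comm]

/-- The five vectors `(1,0), (λ,1), (λ,λ), (1,λ), (0,1)` of `(ℤ[λ]/2)²`, where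
`(p + qλ, r + sλ)` is encoded as `(p, q, r, s)`. -/
def colSet : Finset (ZMod 2 × ZMod 2 × ZMod 2 × ZMod 2) :=
  {(1, 0, 0, 0), (0, 1, 1, 0), (0, 1, 0, 1), (1, 0, 0, 1), (0, 0, 1, 0)}

/-- The vector `(x, y)` has entries in `ℤ[λ]` and reduces modulo `2` to an element of `colSet`. -/
def GoodCol (x y : ℝ) : Prop :=
  ∃ p q r s : ℤ, x = p + q * lam ∧ y = r + s * lam ∧
    ((p : ZMod 2), (q : ZMod 2), (r : ZMod 2), (s : ZMod 2)) ∈ colSet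

theorem colSet_T : ∀ p q r s : ZMod 2, (p, q, r, s) ∈ colSet →
    (p + s, q + r + s, r, s) ∈ colSet := by decide

theorem colSet_S : ∀ p q r s : ZMod 2, (p, q, r, s) ∈ colSet → (r, s, p, q) ∈ colSet := by
  decide

theorem GoodCol.neg {x y : ℝ} (h : GoodCol x y) : GoodCol (-x) (-y) := by
  obtain ⟨p, q, r, s, rfl, rfl, h⟩ := h
  refine ⟨-p, -q, -r, -s, by push_cast; ring, by push_cast; ring, ?_⟩
  simpa [ZMod.neg_eq_self_mod_two] using h

theorem GoodCol.swap {x y : ℝ} (h : GoodCol x y) : GoodCol (-y) x := by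
  obtain ⟨p, q, r, s, rfl, rfl, h⟩ := h
  refine ⟨-r, -s, p, q, by push_cast; ring, rfl, ?_⟩
  simpa [ZMod.neg_eq_self_mod_two] using colSet_S _ _ _ _ h

theorem GoodCol.add {x y : ℝ} (h : GoodCol x y) : GoodCol (x + lam * y) y := by
  obtain ⟨p, q, r, s, rfl, rfl, h⟩ := h
  refine ⟨p + s, q + r + s, r, s, by push_cast; linear_combination (s : ℝ) * lam_sq, rfl, ?_⟩
  simpa using colSet_T _ _ _ _ h

theorem GoodCol.sub {x y : ℝ} (h : GoodCol x y) : GoodCol (x - lam * y) y := by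
  obtain ⟨p, q, r, s, rfl, rfl, h⟩ := h
  refine ⟨p - s, q - r - s, r, s, by push_cast; linear_combination (-s : ℝ) * lam_sq, rfl, ?_⟩
  have := colSet_T _ _ _ _ h
  simpa [sub_eq_add_neg, ZMod.neg_eq_self_mod_two] using this

theorem exists_goodCol {g : PSL2R} (hg : g ∈ G5) :
    ∃ A : SL2R, toPSL A = g ∧ GoodCol (A.1 0 0) (A.1 1 0) := by
  induction hg using Subgroup.closure_induction_left with
  | one => exact ⟨1, map_one _, 1, 0, 0, 0, by simp, by simp, by decide⟩
  | mul_left x hx y _ ih =>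
    obtain ⟨A, rfl, hA⟩ := ih
    rcases hx with rfl | rfl
    · refine ⟨Tgen * A, map_mul _ _ _, ?_⟩
      rw [mul_entry, mul_entry]
      simpa [Tgen] using hA.add
    · refine ⟨Sgen * A, map_mul _ _ _, ?_⟩
      rw [mul_entry, mul_entry]
      simpa [Sgen] using hA.swap
  | inv_mul_cancel x hx y _ ih =>
    obtain ⟨A, rfl, hA⟩ := ih
    rcases hx with rfl | rfl
    · refine ⟨Tgen⁻¹ * A, by simp, ?_⟩
      rw [mul_entry, mul_entry, Tgen_inv]
      simpa [sub_eq_add_neg] using hA.sub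
    · refine ⟨Sgen⁻¹ * A, by simp, ?_⟩
      rw [mul_entry, mul_entry, Sgen_inv]
      simpa using hA.swap.neg

theorem column_of_mem_G5 {A : SL2R} (hA : toPSL A ∈ G5) : GoodCol (A.1 0 0) (A.1 1 0) := by
  obtain ⟨B, hB, hcol⟩ := exists_goodCol hA
  obtain ⟨r, rfl | rfl, h⟩ := entries_of_toPSL_eq hB
  · simpa [h] using hcol
  · simpa [h] using hcol.neg

/-- The element `4` is `G₅`-elementary; it even suffices that `2` divides the lower left entry. -/
theorem sq_of_mem_G5 {A : SL2R} (hA : toPSL A ∈ G5) {k : ℝ} (hk : k ∈ Zlam)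
    (hc : A.1 1 0 = 2 * k) : ∃ z ∈ Zlam, A.1 0 0 ^ 2 = 1 + 4 * z := by
  obtain ⟨p, q, r, s, hx, hy, hcol⟩ := column_of_mem_G5 hA
  obtain ⟨r', s', rfl⟩ := (mem_Zlam_iff k).1 hk
  obtain ⟨rfl, rfl⟩ := coords_unique (p := r) (q := s) (r := 2 * r') (s := 2 * s')
    (by rw [← hy, hc]; push_cast; ring)
  have h2 : ∀ n : ℤ, ((2 * n : ℤ) : ZMod 2) = 0 := fun n => by
    rw [ZMod.intCast_zmod_eq_zero_iff_dvd]; exact ⟨n, rfl⟩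
  rw [h2, h2] at hcol
  have key : ∀ p q : ZMod 2, (p, q, 0, 0) ∈ colSet → p - 1 = 0 ∧ q = 0 := by decide
  obtain ⟨hp, hq⟩ := key _ _ hcol
  have hp' : ((p - 1 : ℤ) : ZMod 2) = 0 := by push_cast; exact hp
  rw [ZMod.intCast_zmod_eq_zero_iff_dvd] at hp' hq
  obtain ⟨p', hp'⟩ := hp'
  obtain ⟨q', rfl⟩ := hq
  have hpe : (p : ℝ) = 1 + 2 * p' := by
    have : p = 1 + 2 * p' := by push_cast at hp'; linarith
    exact_mod_cast this
  have hw : (p' + q' * lam : ℝ) ∈ Zlam := (mem_Zlam_iff _).2 ⟨p', q', rfl⟩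
  refine ⟨(p' + q' * lam) + (p' + q' * lam) ^ 2, Zlam.add_mem hw (Zlam.pow_mem hw 2), ?_⟩
  rw [hx, hpe]; push_cast; ring

/-! ### The homomorphism -/

/-- The class of `(c/t)·a` modulo `4` for a matrix `[[a, b], [c, d]]`. -/
noncomputable def cls (t : ℝ) (A : SL2R) : ZMod 4 × ZMod 4 := red (A.1 1 0 * A.1 0 0 / t)

theorem cls_congr (t : ℝ) {A B : SL2R} (h : toPSL A = toPSL B) : cls t A = cls t B := by
  obtain ⟨r, rfl | rfl, h⟩ := entries_of_toPSL_eq h <;> simp [cls, h]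

theorem cls_out (t : ℝ) (A : SL2R) : cls t (Quotient.out (toPSL A)) = cls t A :=
  cls_congr t (Quotient.out_eq (toPSL A))

theorem cls_eq {t : ℝ} (ht : t ≠ 0) {A : SL2R} {k : ℝ} (h : A.1 1 0 = t * k) :
    cls t A = red (k * A.1 0 0) := by
  rw [cls, h]; congr 1; field_simp

theorem sq_of_four_mul {u : ℝ} (hu : u ∈ Zlam) {A : SL2R} (hA : toPSL A ∈ G5)
    {k : ℝ} (hk : k ∈ Zlam) (h : A.1 1 0 = 4 * u * k) :
    ∃ z ∈ Zlam, A.1 0 0 ^ 2 = 1 + 4 * z :=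
  sq_of_mem_G5 hA (k := 2 * (u * k))
    (Zlam.mul_mem (by exact_mod_cast intCast_mem Zlam 2) (Zlam.mul_mem hu hk)) (by rw [h]; ring)

theorem cls_mul {u : ℝ} (hu : u ∈ Zlam) (hu0 : u ≠ 0) {A B : SL2R}
    (hA : A ∈ SL0 (4 * u)) (hB : B ∈ SL0 (4 * u)) (hBG : toPSL B ∈ G5) :
    cls (4 * u) (A * B) = cls (4 * u) A + cls (4 * u) B := by
  have ht : 4 * u ≠ 0 := by simpa using hu0
  obtain ⟨hAe, k, hk, hAc⟩ := hA
  obtain ⟨hBe, l, hl, hBc⟩ := hB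
  obtain ⟨z, hz, hsq⟩ := sq_of_four_mul hu hBG hl hBc
  have h10 : (A * B).1 1 0 = 4 * u * (k * B.1 0 0 + A.1 1 1 * l) := by
    rw [mul_entry, hAc, hBc]; ring
  have h00 : (A * B).1 0 0 = A.1 0 0 * B.1 0 0 + A.1 0 1 * (4 * u * l) := by
    rw [mul_entry, hBc]
  have hdet : A.1 0 0 * A.1 1 1 = 1 + A.1 0 1 * (4 * u * k) := by
    have := A.2
    rw [Matrix.det_fin_two, hAc] at this
    linear_combination this
  have ha := hAe 0 0
  have hb := hAe 0 1
  have hd := hAe 1 1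
  have hx := hBe 0 0
  rw [cls_eq ht hAc, cls_eq ht hBc, cls_eq ht h10, ← red_add (Zlam.mul_mem hk ha)
    (Zlam.mul_mem hl hx)]
  -- `(kx + dl)(ax + 4bul)` with `x² = 1 + 4z` and `ad = 1 + 4buk`
  refine red_congr (z := k * A.1 0 0 * z + A.1 0 1 * u * k * (l * B.1 0 0)
    + (k * B.1 0 0 + A.1 1 1 * l) * (A.1 0 1 * (u * l)))
    (Zlam.add_mem (Zlam.mul_mem hk ha) (Zlam.mul_mem hl hx)) ?_ ?_
  · have hkx := Zlam.add_mem (Zlam.mul_mem hk hx) (Zlam.mul_mem hd hl)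
    have hbuk := Zlam.mul_mem (Zlam.mul_mem hb hu) hk
    exact Zlam.add_mem (Zlam.add_mem (Zlam.mul_mem (Zlam.mul_mem hk ha) hz)
      (Zlam.mul_mem hbuk (Zlam.mul_mem hl hx)))
      (Zlam.mul_mem hkx (Zlam.mul_mem hb (Zlam.mul_mem hu hl)))
  · rw [h00]
    linear_combination (k * A.1 0 0) * hsq + (l * B.1 0 0) * hdet

/-- The homomorphism `[[a, b], [c, d]] ↦ (c/t)·a mod 4` on `G₀(t)`, where `t = 4u`. -/
noncomputable def clsHom {u : ℝ} (hu : u ∈ Zlam) (hu0 : u ≠ 0) :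
    G0 (4 * u) →* Multiplicative (ZMod 4 × ZMod 4) :=
  MonoidHom.mk' (fun g => Multiplicative.ofAdd (cls (4 * u) (Quotient.out g.1))) (by
    rintro ⟨g, hg⟩ ⟨h, hh⟩
    obtain ⟨hgG, A, hA, rfl⟩ := hg
    obtain ⟨hhG, B, hB, rfl⟩ := hh
    change Multiplicative.ofAdd (cls (4 * u) (Quotient.out (toPSL A * toPSL B))) =
      Multiplicative.ofAdd (cls (4 * u) (Quotient.out (toPSL A))) *
        Multiplicative.ofAdd (cls (4 * u) (Quotient.out (toPSL B)))
    rw [← map_mul, cls_out, cls_out, cls_out, cls_mul hu hu0 hA hB hhG, ofAdd_add])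

theorem clsHom_apply {u : ℝ} (hu : u ∈ Zlam) (hu0 : u ≠ 0) (A : SL2R)
    (hA : toPSL A ∈ G0 (4 * u)) :
    clsHom hu hu0 ⟨toPSL A, hA⟩ = Multiplicative.ofAdd (cls (4 * u) A) :=
  congrArg Multiplicative.ofAdd (cls_out (4 * u) A)

theorem clsHom_ker {u : ℝ} (hu : u ∈ Zlam) (hu0 : u ≠ 0) :
    (clsHom hu hu0).ker = (G0 (16 * u)).subgroupOf (G0 (4 * u)) := by
  have ht : 4 * u ≠ 0 := by simpa using hu0
  ext ⟨g, hg⟩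
  rw [MonoidHom.mem_ker, Subgroup.mem_subgroupOf]
  constructor
  · obtain ⟨hgG, A, hA, rfl⟩ := id hg
    obtain ⟨hAe, k, hk, hAc⟩ := id hA
    obtain ⟨z, hz, hsq⟩ := sq_of_four_mul hu hgG hk hAc
    rw [clsHom_apply, cls_eq ht hAc, ofAdd_eq_one, red_eq_zero_iff (Zlam.mul_mem hk (hAe 0 0))]
    rintro ⟨l, hl, hkl⟩
    -- `a` is its own inverse modulo `4`, so `4 ∣ ka` gives `4 ∣ k`
    refine ⟨hgG, A, ⟨hAe, l * A.1 0 0 - z * k,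
      Zlam.sub_mem (Zlam.mul_mem hl (hAe 0 0)) (Zlam.mul_mem hz hk), ?_⟩, rfl⟩
    rw [hAc]
    linear_combination (4 * u * A.1 0 0) * hkl - (4 * u * k) * hsq
  · rintro ⟨hgG, A, ⟨hAe, l, hl, hAc⟩, rfl⟩
    have hAc' : A.1 1 0 = 4 * u * (4 * l) := by rw [hAc]; ring
    rw [clsHom_apply, cls_eq ht hAc', ofAdd_eq_one,
      red_eq_zero_iff (Zlam.mul_mem (four_mul_mem hl) (hAe 0 0))]
    exact ⟨l * A.1 0 0, Zlam.mul_mem hl (hAe 0 0), by ring⟩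

/-! ### Surjectivity -/

/-- The matrix `[[1, x], [0, 1]]`. -/
def upper (x : ℝ) : SL2R := ⟨!![1, x; 0, 1], by simp [Matrix.det_fin_two_of]⟩

/-- The matrix `[[1, 0], [x, 1]]`. -/
def lower (x : ℝ) : SL2R := ⟨!![1, 0; x, 1], by simp [Matrix.det_fin_two_of]⟩

/-- The parabolic matrix `[[1, 0], [λ, 1]] * [[1, nλ], [0, 1]] * [[1, 0], [-λ, 1]]`. -/
noncomputable def parab (n : ℤ) : SL2R := lower lam * upper (n * lam) * lower (-lam)

theorem upper_mem (n : ℤ) : toPSL (upper (n * lam)) ∈ G5 := by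
  have hadd : ∀ x y, upper (x + y) = upper x * upper y := fun x y => by
    ext i j
    rw [mul_entry]
    fin_cases i <;> fin_cases j <;> simp [upper, add_comm]
  have hT : toPSL (upper lam) ∈ G5 := Subgroup.subset_closure (Or.inl rfl)
  have h0 : upper 0 = 1 := by
    ext i j; fin_cases i <;> fin_cases j <;> simp [upper]
  have hinv : upper (-lam) = (upper lam)⁻¹ := by
    rw [eq_inv_iff_mul_eq_one, ← hadd, neg_add_cancel, h0]
  induction n using Int.induction_on with
  | zero => simp [h0]
  | succ n ih =>
    have : (((n : ℤ) + 1 : ℤ) : ℝ) * lam = ((n : ℤ) : ℝ) * lam + lam := by push_cast; ring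
    rw [this, hadd, map_mul]
    exact G5.mul_mem ih hT
  | pred n ih =>
    have : ((-(n : ℤ) - 1 : ℤ) : ℝ) * lam = ((-(n : ℤ) : ℤ) : ℝ) * lam + -lam := by
      push_cast; ring
    rw [this, hadd, map_mul, hinv, map_inv]
    exact G5.mul_mem ih (G5.inv_mem hT)

theorem lower_mem (n : ℤ) : toPSL (lower (n * lam)) ∈ G5 := by
  have hS : toPSL Sgen ∈ G5 := Subgroup.subset_closure (Or.inr rfl)
  have : lower (n * lam) = Sgen * upper ((-n : ℤ) * lam) * Sgen⁻¹ := by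
    ext i j
    rw [mul_entry, mul_entry, mul_entry, Sgen_inv]
    fin_cases i <;> fin_cases j <;> simp [lower, upper, Sgen]
  rw [this, map_mul, map_mul, map_inv]
  exact G5.mul_mem (G5.mul_mem hS (upper_mem _)) (G5.inv_mem hS)

theorem parab_mem (n : ℤ) : toPSL (parab n) ∈ G5 := by
  rw [parab, map_mul, map_mul]
  refine G5.mul_mem (G5.mul_mem ?_ (upper_mem n)) ?_
  · simpa using lower_mem 1
  · simpa using lower_mem (-1)

theorem parab_entries (n : ℤ) : (parab n).1 =
    !![1 - n * lam ^ 2, n * lam; -(n * lam ^ 3), 1 + n * lam ^ 2] := by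
  ext i j
  rw [parab, mul_entry, mul_entry, mul_entry]
  fin_cases i <;> fin_cases j <;> simp [lower, upper] <;> ring

/-- The integer `p² + pq - q²` is the norm of `p + qλ`. It is odd unless `p` and `q` are both even,
since `2` is inert in `ℤ[λ]`; hence its square is `1` modulo `4`. -/
theorem norm_sq_of_coprime {p q : ℤ} (h : IsCoprime p q) :
    ∃ n : ℤ, (p ^ 2 + p * q - q ^ 2) ^ 2 = 1 + 4 * n := by
  have hodd : Odd (p ^ 2 + p * q - q ^ 2) := by
    rcases Int.even_or_odd p with hp | hp <;> rcases Int.even_or_odd q with hq | hq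
    · have := h.isUnit_of_dvd' hp.two_dvd hq.two_dvd
      exact absurd this (by decide)
    · obtain ⟨⟨a, rfl⟩, ⟨b, rfl⟩⟩ := And.intro hp hq
      exact ⟨2 * a ^ 2 + a * (2 * b + 1) - 2 * b ^ 2 - 2 * b - 1, by ring⟩
    · obtain ⟨⟨a, rfl⟩, ⟨b, rfl⟩⟩ := And.intro hp hq
      exact ⟨2 * a ^ 2 + 2 * a + b * (2 * a + 1) - 2 * b ^ 2, by ring⟩
    · obtain ⟨⟨a, rfl⟩, ⟨b, rfl⟩⟩ := And.intro hp hq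
      exact ⟨2 * a ^ 2 + 3 * a + 2 * a * b - b - 2 * b ^ 2, by ring⟩
  obtain ⟨m, hm⟩ := hodd
  exact ⟨m + m ^ 2, by rw [hm]; ring⟩

theorem exists_primitive {u : ℝ} (hu : u ∈ Zlam) (hu0 : u ≠ 0) :
    ∃ g p q : ℤ, IsCoprime p q ∧ u = g * (p + q * lam) := by
  obtain ⟨p, q, rfl⟩ := (mem_Zlam_iff u).1 hu
  have hpos : 0 < Int.gcd p q := by
    rw [Int.gcd_pos_iff]
    by_contra! h
    exact hu0 (by simp [h.1, h.2])
  obtain ⟨p', q', hcop, hp, hq⟩ := Int.exists_gcd_one hpos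
  refine ⟨Int.gcd p q, p', q', Int.isCoprime_iff_gcd_eq_one.2 hcop, ?_⟩
  have hp' : (p : ℝ) = p' * (Int.gcd p q : ℤ) := by exact_mod_cast hp
  have hq' : (q : ℝ) = q' * (Int.gcd p q : ℤ) := by exact_mod_cast hq
  rw [hp', hq']; push_cast; ring

theorem clsHom_surjective {u : ℝ} (hu : u ∈ Zlam) (hu0 : u ≠ 0) :
    Function.Surjective (clsHom hu hu0) := by
  have ht : 4 * u ≠ 0 := by simpa using hu0
  intro target
  obtain ⟨x, y, hxy⟩ : ∃ x y : ℤ, red (x + y * lam) = target.toAdd :=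
    ⟨target.toAdd.1.val, target.toAdd.2.val, by rw [red_mk]; ext <;> simp⟩
  obtain ⟨g, p, q, hcop, rfl⟩ := exists_primitive hu hu0
  obtain ⟨n, hn⟩ := norm_sq_of_coprime hcop
  set N : ℤ := p ^ 2 + p * q - q ^ 2 with hN
  -- the conjugate of `p + qλ`
  set w : ℝ := ((p + q : ℤ) : ℝ) + ((-q : ℤ) : ℝ) * lam with hw
  have hwm : w ∈ Zlam := (mem_Zlam_iff _).2 ⟨_, _, rfl⟩
  have hnorm : (p + q * lam) * w = N := by
    rw [hw, hN]; push_cast; linear_combination (-(q : ℝ) ^ 2) * lam_sq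
  have hnR : (N : ℝ) ^ 2 = 1 + 4 * n := by exact_mod_cast hn
  have hint : ∀ i : ℤ, (i : ℝ) ∈ Zlam := fun i => intCast_mem Zlam i
  -- `-N(p + qλ)(x + yλ) = r + sλ = (s - 2r)λ + rλ³`
  obtain ⟨r, s, hrs⟩ := (mem_Zlam_iff (-N * (p + q * lam) * (x + y * lam) : ℝ)).1
    ((mem_Zlam_iff _).2 ⟨-N * (p * x + q * y), -N * (p * y + q * x + q * y), by
      push_cast; linear_combination (-(N : ℝ) * q * y) * lam_sq⟩)
  have hlam3 : lam ^ 3 = 1 + 2 * lam := by linear_combination (lam + 1) * lam_sq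
  set m : ℤ := 4 * g * N with hm
  have hmR : (m : ℝ) = 4 * (g * (p + q * lam)) * w := by
    rw [hm]; push_cast; rw [← hnorm]; ring
  have hAc : (lower ((-(m * (s - 2 * r)) : ℤ) * lam)).1 1 0 =
      4 * (g * (p + q * lam)) * (-(w * (s - 2 * r) * lam)) := by
    simp [lower]; rw [hmR]; ring
  have hA : toPSL (lower ((-(m * (s - 2 * r)) : ℤ) * lam)) ∈ G0 (4 * (g * (p + q * lam))) := by
    refine ⟨lower_mem _, _, ⟨?_, -(w * ((s - 2 * r : ℤ) : ℝ) * lam), ?_, ?_⟩, rfl⟩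
    · intro i j
      fin_cases i <;> fin_cases j
      · exact Zlam.one_mem
      · exact Zlam.zero_mem
      · exact Zlam.mul_mem (hint _) lam_mem
      · exact Zlam.one_mem
    · exact Zlam.neg_mem (Zlam.mul_mem (Zlam.mul_mem hwm (hint _)) lam_mem)
    · rw [hAc]; push_cast; ring
  have hBc : (parab (m * r)).1 1 0 = 4 * (g * (p + q * lam)) * (-(w * r * lam ^ 3)) := by
    rw [parab_entries]; simp; rw [hmR]; ring
  have hwr : -(w * r * lam ^ 3) ∈ Zlam :=
    Zlam.neg_mem (Zlam.mul_mem (Zlam.mul_mem hwm (hint _)) (Zlam.pow_mem lam_mem 3))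
  have hwr' : -(w * ((s - 2 * r : ℤ) : ℝ) * lam) ∈ Zlam :=
    Zlam.neg_mem (Zlam.mul_mem (Zlam.mul_mem hwm (hint _)) lam_mem)
  have hB : toPSL (parab (m * r)) ∈ G0 (4 * (g * (p + q * lam))) := by
    refine ⟨parab_mem _, _, ⟨?_, -(w * r * lam ^ 3), hwr, hBc⟩, rfl⟩
    have h2 := Zlam.mul_mem (hint (m * r)) (Zlam.pow_mem lam_mem 2)
    intro i j
    rw [parab_entries]
    fin_cases i <;> fin_cases j
    · exact Zlam.sub_mem Zlam.one_mem h2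
    · exact Zlam.mul_mem (hint _) lam_mem
    · exact Zlam.neg_mem (Zlam.mul_mem (hint _) (Zlam.pow_mem lam_mem 3))
    · exact Zlam.add_mem Zlam.one_mem h2
  refine ⟨⟨_, hA⟩ * ⟨_, hB⟩, ?_⟩
  rw [map_mul, clsHom_apply, clsHom_apply, cls_eq ht hAc, cls_eq ht hBc, ← ofAdd_add]
  have e1 : red (-(w * (s - 2 * r) * lam) *
      (lower ((-(m * (s - 2 * r)) : ℤ) * lam)).1 0 0) =
      red (-(w * ((s - 2 * r : ℤ) : ℝ) * lam)) := by
    congr 1; simp [lower]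
  have e2 : red (-(w * r * lam ^ 3) * (parab (m * r)).1 0 0) = red (-(w * r * lam ^ 3)) := by
    refine red_congr (z := -(w * r * lam ^ 3) * (-((g * N * r : ℤ) * lam ^ 2))) hwr
      (Zlam.mul_mem hwr (Zlam.neg_mem (Zlam.mul_mem (hint _) (Zlam.pow_mem lam_mem 2)))) ?_
    rw [parab_entries, hm]; simp; ring
  have hxyr : (x + y * lam : ℝ) ∈ Zlam := (mem_Zlam_iff _).2 ⟨x, y, rfl⟩
  have e3 : red (-(w * ((s - 2 * r : ℤ) : ℝ) * lam) + -(w * r * lam ^ 3)) =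
      red (x + y * lam) := by
    refine red_congr (z := n * (x + y * lam)) hxyr (Zlam.mul_mem (hint n) hxyr) ?_
    rw [hlam3]; push_cast
    linear_combination w * hrs + (N * (x + y * lam)) * hnorm + (x + y * lam) * hnR
  rw [e1, e2, ← red_add hwr' hwr, e3, hxy]
  rfl

/-- If `16 ∣ τ`, then `G₀(τ) ⊴ G₀(τ/4)` and `G₀(τ/4)/G₀(τ) ≅ ℤ/4 × ℤ/4`. -/
theorem quotient_G0_of_sixteen_dvd (τ : Zlam) (hτ0 : τ ≠ 0) (hτu : ¬ IsUnit τ)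
    (h16 : (16 : Zlam) ∣ τ) :
    ((G0 (τ : ℝ)).subgroupOf (G0 ((τ : ℝ) / 4))).Normal ∧
    ∃ φ : G0 ((τ : ℝ) / 4) →* Multiplicative (ZMod 4 × ZMod 4),
      Function.Surjective φ ∧ φ.ker = (G0 (τ : ℝ)).subgroupOf (G0 ((τ : ℝ) / 4)) := by
  obtain ⟨u, rfl⟩ := h16
  have hu0 : (u : ℝ) ≠ 0 := by
    intro h
    have hu : u = 0 := Subtype.ext h
    exact hτ0 (by rw [hu, mul_zero])
  have e16 : (((16 : Zlam) * u : Zlam) : ℝ) = 16 * (u : ℝ) := by push_cast; rfl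
  have e4 : (16 * (u : ℝ)) / 4 = 4 * (u : ℝ) := by ring
  rw [e16, e4]
  refine ⟨?_, clsHom u.2 hu0, clsHom_surjective u.2 hu0, clsHom_ker u.2 hu0⟩
  rw [← clsHom_ker u.2 hu0]
  exact MonoidHom.normal_ker _
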